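/- Let q, a, B be nonzero complex numbers such that q^m ≠ 1 for all m ≥ 1, a q^m ≠ 1 and a^2 q^{2m} ≠ 1 for all m ≥ 1, a q^{2r} ≠ -1 for all r ≥ 0, and B q^j ≠ 1 and a q^{j+1} ≠ -B for all j ≥ 0 (so that all denominators below are nonzero). Suppose (α_n, β_n) is a Bailey pair with parameters (a^2, q^2). Define β'_n = ∑_{k=0}^{n} [(-a;q)_{2k} (B^2;q^2)_k (q^{-k+1}/B;q)_{n-k} (B q^k;q)_{n-k} / ((-aq/B;q)_n (B;q)_n (q^2;q^2)_{n-k})] · B^{-k} q^{k - k(k-1)/2} · β_k and α'_r = ((-B;q)_r / (-aq/B;q)_r) · ((1+a)/(1+a q^{2r})) · B^{-r} q^{r - r(r-1)/2} · α_r. Then (α'_n, β'_n) is a Bailey pair with parameters (a, q). -/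

import Mathlib

/-- The finite q-Pochhammer symbol `(x;q)_n = ∏_{j=0}^{n-1} (1 - x q^j)`. -/
noncomputable def qPoch (x q : ℂ) (n : ℕ) : ℂ := ∏ j ∈ Finset.range n, (1 - x * q ^ j)

/-- `(α, β)` is a Bailey pair with parameters `(a, q)`. -/
def IsBaileyPair (a q : ℂ) (α β : ℕ → ℂ) : Prop :=
  ∀ n : ℕ, β n = ∑ r ∈ Finset.range (n + 1), α r / (qPoch q q (n - r) * qPoch (a * q) q (n + r))

/-!
Inserting the Bailey relation of `(α, β)` into `β'` and exchanging the two sums reduces the theorem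
to an identity for each coefficient of `α r`. Replacing `(a, B)` by `(a q^{2r}, B q^r)` reduces that
identity to `r = 0`, where it is the terminating summation
`∑_k (-a;q)_{2k} (-B;q)_k (q^{1-k}/B;q)_{n-k} B^{-k} q^{k-k(k-1)/2}
  / ((q²;q²)_{n-k} (q²;q²)_k (a²q²;q²)_k) = (-aq/B;q)_n / ((q;q)_n (aq;q)_n)`.
The latter follows by induction on `n`: a creative-telescoping certificate expresses the sum for
`(n + 1, a)` through those for `(n, a)` and `(n, a q)`, and the right-hand side satisfies the same
three-term relation.
-/

section QPochhammer

variable (x q : ℂ) (m n : ℕ)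

lemma qPoch_zero : qPoch x q 0 = 1 := by
  simp [qPoch]

lemma qPoch_succ : qPoch x q (n + 1) = qPoch x q n * (1 - x * q ^ n) :=
  Finset.prod_range_succ ..

lemma qPoch_add : qPoch x q (m + n) = qPoch x q m * qPoch (x * q ^ m) q n := by
  simp only [qPoch, Finset.prod_range_add, pow_add, mul_assoc]

lemma qPoch_succ' : qPoch x q (n + 1) = (1 - x) * qPoch (x * q) q n := by
  rw [add_comm, qPoch_add, qPoch_succ, qPoch_zero, pow_zero, pow_one, mul_one, one_mul]

lemma one_sub_mul_qPoch_mul : (1 - x) * qPoch (x * q) q n = qPoch x q n * (1 - x * q ^ n) := by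
  rw [← qPoch_succ', qPoch_succ]

lemma qPoch_sq : qPoch (x ^ 2) (q ^ 2) n = qPoch x q n * qPoch (-x) q n := by
  simp only [qPoch, ← Finset.prod_mul_distrib]
  exact Finset.prod_congr rfl fun j _ => by ring

variable {x q}

lemma qPoch_ne_zero (h : ∀ j : ℕ, x * q ^ j ≠ 1) : qPoch x q n ≠ 0 :=
  Finset.prod_ne_zero_iff.2 fun j _ => sub_ne_zero.2 (h j).symm

lemma qPoch_mul_self_ne_zero (h : ∀ m : ℕ, 1 ≤ m → x * q ^ m ≠ 1) : qPoch (x * q) q n ≠ 0 :=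
  qPoch_ne_zero n fun j => by
    rw [mul_assoc, ← pow_succ']
    exact h (j + 1) j.succ_pos

lemma qPoch_self_ne_zero (h : ∀ m : ℕ, 1 ≤ m → q ^ m ≠ 1) : qPoch q q n ≠ 0 := by
  simpa only [one_mul] using qPoch_mul_self_ne_zero (x := 1) n (by simpa only [one_mul] using h)

lemma qPoch_sq_self_ne_zero (h : ∀ m : ℕ, 1 ≤ m → q ^ m ≠ 1) : qPoch (q ^ 2) (q ^ 2) n ≠ 0 :=
  qPoch_self_ne_zero n fun m hm => by
    rw [← pow_mul]
    exact h (2 * m) (by omega)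

end QPochhammer

section SquareNonvanishing

variable {q a : ℂ} (ha2 : ∀ m : ℕ, 1 ≤ m → a ^ 2 * q ^ (2 * m) ≠ 1)
include ha2

lemma mul_pow_ne_one_of_sq {m : ℕ} (hm : 1 ≤ m) : a * q ^ m ≠ 1 := fun h =>
  ha2 m hm (by linear_combination (a * q ^ m + 1) * h)

lemma qPoch_mul_sq_ne_zero (n : ℕ) : qPoch (a ^ 2 * q ^ 2) (q ^ 2) n ≠ 0 :=
  qPoch_mul_self_ne_zero n fun m hm => by
    rw [← pow_mul]
    exact ha2 m hm

lemma sq_mul_pow_ne_one_shift (r : ℕ) (m : ℕ) (hm : 1 ≤ m) :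
    (a * q ^ r) ^ 2 * q ^ (2 * m) ≠ 1 := by
  convert ha2 (r + m) (by omega) using 1
  ring

end SquareNonvanishing

/-- The factor `B^{-k} q^{k - k(k-1)/2}` common to both sequences of the new Bailey pair. -/
noncomputable def baseChangeWeight (q B : ℂ) (k : ℕ) : ℂ :=
  B ^ (-(k : ℤ)) * q ^ ((k : ℤ) - ((k * (k - 1) / 2 : ℕ) : ℤ))

/-- The coefficient of `β_k` in `(-aq/B;q)_n β'_n`, with `(B²;q²)_k (B q^k;q)_{n-k} / (B;q)_n`
simplified to `(-B;q)_k`. -/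
noncomputable def baseChangeKernel (q a B : ℂ) (n k : ℕ) : ℂ :=
  qPoch (-a) q (2 * k) * qPoch (-B) q k * qPoch (q ^ (1 - (k : ℤ)) / B) q (n - k) /
    qPoch (q ^ 2) (q ^ 2) (n - k) * baseChangeWeight q B k

/-- The summand of the terminating summation to which the coefficient of `α_0` amounts. -/
noncomputable def baseChangeSummand (q a B : ℂ) (n k : ℕ) : ℂ :=
  baseChangeKernel q a B n k / (qPoch (q ^ 2) (q ^ 2) k * qPoch (a ^ 2 * q ^ 2) (q ^ 2) k)

section Weight

variable {q B : ℂ}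

lemma baseChangeWeight_zero : baseChangeWeight q B 0 = 1 := by
  simp [baseChangeWeight]

lemma baseChangeWeight_succ (hq : q ≠ 0) (hB : B ≠ 0) (k : ℕ) :
    baseChangeWeight q B (k + 1) = baseChangeWeight q B k * (q / (B * q ^ k)) := by
  have hexp : ((k + 1 : ℕ) : ℤ) - (((k + 1) * (k + 1 - 1) / 2 : ℕ) : ℤ) =
      (k : ℤ) - ((k * (k - 1) / 2 : ℕ) : ℤ) + (1 - k) := by
    rw [Nat.triangle_succ]
    push_cast
    ring
  rw [baseChangeWeight, hexp, Nat.cast_succ, neg_add, zpow_add₀ hB, zpow_add₀ hq,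
    zpow_sub₀ hq 1, zpow_one, zpow_natCast, zpow_neg_one, baseChangeWeight]
  ring

lemma baseChangeWeight_add (hq : q ≠ 0) (hB : B ≠ 0) (r j : ℕ) :
    baseChangeWeight q B (r + j) =
      baseChangeWeight q B r * baseChangeWeight q (B * q ^ r) j := by
  induction j with
  | zero => rw [baseChangeWeight_zero, mul_one, add_zero]
  | succ j ih =>
    rw [← add_assoc, baseChangeWeight_succ hq hB, ih,
      baseChangeWeight_succ hq (mul_ne_zero hB (pow_ne_zero r hq)), pow_add]
    ring

end Weight

lemma baseChangeKernel_add_add {q B : ℂ} (a : ℂ) (hq : q ≠ 0) (hB : B ≠ 0) (r n k : ℕ) :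
    baseChangeKernel q a B (r + n) (r + k) =
      qPoch (-a) q (2 * r) * qPoch (-B) q r * baseChangeWeight q B r *
        baseChangeKernel q (a * q ^ (2 * r)) (B * q ^ r) n k := by
  have hbase : q ^ (1 - ((r + k : ℕ) : ℤ)) / B = q ^ (1 - (k : ℤ)) / (B * q ^ r) := by
    rw [Nat.cast_add, add_comm (r : ℤ), ← sub_sub, zpow_sub₀ hq _ (r : ℤ), zpow_natCast, div_div,
      mul_comm B]
  simp only [baseChangeKernel]
  rw [hbase, Nat.add_sub_add_left, mul_add, qPoch_add (-a), qPoch_add (-B),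
    baseChangeWeight_add hq hB, neg_mul, neg_mul]
  ring

section Contiguity

-- The first index is written `j + i` or `k + i`, so that no truncated subtraction remains.
variable {q : ℂ} (a b : ℂ) (i j : ℕ)

lemma zpow_one_sub_div (hq : q ≠ 0) : q ^ (1 - (j : ℤ)) / b = q / (b * q ^ j) := by
  rw [zpow_sub₀ hq, zpow_one, zpow_natCast, div_div, mul_comm b]

lemma baseChangeSummand_succ_left (hq : q ≠ 0) (hq1 : ∀ m : ℕ, 1 ≤ m → q ^ m ≠ 1) :
    baseChangeSummand q a b (j + i + 1) j * (1 - q ^ 2 * (q ^ 2) ^ i) =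
      baseChangeSummand q a b (j + i) j * (1 - q / (b * q ^ j) * q ^ i) := by
  have hi := qPoch_sq_self_ne_zero i hq1
  have hi' := qPoch_sq_self_ne_zero (i + 1) hq1
  rw [qPoch_succ] at hi'
  have hfactor := right_ne_zero_of_mul hi'
  simp only [baseChangeSummand, baseChangeKernel]
  rw [add_assoc, Nat.add_sub_cancel_left, Nat.add_sub_cancel_left, qPoch_succ, qPoch_succ,
    ← zpow_one_sub_div b j hq]
  field_simp

lemma baseChangeSummand_mul_self {a : ℂ} (n : ℕ)
    (ha2 : ∀ m : ℕ, 1 ≤ m → a ^ 2 * q ^ (2 * m) ≠ 1) :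
    (1 + a) * baseChangeSummand q (a * q) b n j * (1 - a ^ 2 * q ^ 2 * (q ^ 2) ^ j) =
      baseChangeSummand q a b n j * (1 + a * q ^ (2 * j)) * (1 - a ^ 2 * q ^ 2) := by
  have hnum : (1 + a) * qPoch (-(a * q)) q (2 * j) =
      qPoch (-a) q (2 * j) * (1 + a * q ^ (2 * j)) := by
    simpa only [sub_neg_eq_add, neg_mul] using one_sub_mul_qPoch_mul (-a) q (2 * j)
  have hden := one_sub_mul_qPoch_mul (a ^ 2 * q ^ 2) (q ^ 2) j
  have h := qPoch_mul_sq_ne_zero ha2 j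
  have h' := qPoch_mul_sq_ne_zero ha2 (j + 1)
  have hshift := right_ne_zero_of_mul (qPoch_succ' .. ▸ h')
  have hquot : (1 - a ^ 2 * q ^ 2 * (q ^ 2) ^ j) / qPoch (a ^ 2 * q ^ 2 * q ^ 2) (q ^ 2) j =
      (1 - a ^ 2 * q ^ 2) / qPoch (a ^ 2 * q ^ 2) (q ^ 2) j := by
    rw [div_eq_div_iff hshift h]
    linear_combination -hden
  simp only [baseChangeSummand, baseChangeKernel]
  rw [show (a * q) ^ 2 * q ^ 2 = a ^ 2 * q ^ 2 * q ^ 2 by ring]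
  linear_combination
    qPoch (-b) q j * qPoch (q ^ (1 - (j : ℤ)) / b) q (n - j) * baseChangeWeight q b j /
      (qPoch (q ^ 2) (q ^ 2) (n - j) * qPoch (q ^ 2) (q ^ 2) j) *
      ((1 - a ^ 2 * q ^ 2 * (q ^ 2) ^ j) / qPoch (a ^ 2 * q ^ 2 * q ^ 2) (q ^ 2) j * hnum +
        qPoch (-a) q (2 * j) * (1 + a * q ^ (2 * j)) * hquot)

lemma baseChangeSummand_succ_succ {a b : ℂ} (hq : q ≠ 0) (hb : b ≠ 0)
    (hq1 : ∀ m : ℕ, 1 ≤ m → q ^ m ≠ 1) (ha2 : ∀ m : ℕ, 1 ≤ m → a ^ 2 * q ^ (2 * m) ≠ 1) :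
    baseChangeSummand q a b (j + i + 1) (j + 1) * (1 - 1 / (b * q ^ j) * q ^ i) *
        ((1 - q ^ 2 * (q ^ 2) ^ j) * (1 - a ^ 2 * q ^ 2 * (q ^ 2) ^ j)) =
      baseChangeSummand q a b (j + i) j * ((1 - 1 / (b * q ^ j)) * (1 + a * q ^ (2 * j)) *
        (1 + a * q ^ (2 * j + 1)) * (1 + b * q ^ j) * (q / (b * q ^ j))) := by
  have hbase : q ^ (1 - ((j + 1 : ℕ) : ℤ)) / b = 1 / (b * q ^ j) := by
    rw [zpow_one_sub_div b (j + 1) hq, pow_succ]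
    field_simp
  have hbase' : q ^ (1 - (j : ℤ)) / b = 1 / (b * q ^ j) * q := by
    rw [zpow_one_sub_div b j hq]
    ring
  have hshift := one_sub_mul_qPoch_mul (1 / (b * q ^ j)) q i
  have hj' := qPoch_sq_self_ne_zero (j + 1) hq1
  have ha' := qPoch_mul_sq_ne_zero ha2 (j + 1)
  rw [qPoch_succ] at hj' ha'
  simp only [baseChangeSummand, baseChangeKernel]
  rw [show j + i + 1 - (j + 1) = i by omega, Nat.add_sub_cancel_left, hbase, hbase',
    show 2 * (j + 1) = 2 * j + 1 + 1 by ring, baseChangeWeight_succ hq hb]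
  simp only [qPoch_succ _ _ (2 * j + 1), qPoch_succ _ _ (2 * j), qPoch_succ _ _ j]
  have hcancel : (1 - q ^ 2 * (q ^ 2) ^ j) * (1 - a ^ 2 * q ^ 2 * (q ^ 2) ^ j) /
      (qPoch (q ^ 2) (q ^ 2) j * (1 - q ^ 2 * (q ^ 2) ^ j) *
        (qPoch (a ^ 2 * q ^ 2) (q ^ 2) j * (1 - a ^ 2 * q ^ 2 * (q ^ 2) ^ j))) =
      1 / (qPoch (q ^ 2) (q ^ 2) j * qPoch (a ^ 2 * q ^ 2) (q ^ 2) j) := by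
    rw [mul_mul_mul_comm, div_mul_cancel_right₀
      (mul_ne_zero (right_ne_zero_of_mul hj') (right_ne_zero_of_mul ha')), one_div]
  linear_combination
    qPoch (-a) q (2 * j) * (1 + a * q ^ (2 * j)) * (1 + a * q ^ (2 * j + 1)) *
      qPoch (-b) q j * (1 + b * q ^ j) / qPoch (q ^ 2) (q ^ 2) i * baseChangeWeight q b j *
      (q / (b * q ^ j)) *
      (qPoch (1 / (b * q ^ j)) q i * (1 - 1 / (b * q ^ j) * q ^ i) * hcancel -
        1 / (qPoch (q ^ 2) (q ^ 2) j * qPoch (a ^ 2 * q ^ 2) (q ^ 2) j) * hshift)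

end Contiguity

lemma creativeTelescoping_identity {q a b x y : ℂ} (hb : b ≠ 0) (hy : y ≠ 0)
    (hxq : 1 - q ^ 2 * x ^ 2 ≠ 0) (haq : 1 - a ^ 2 * q ^ 2 * y ^ 2 ≠ 0) :
    a * b * (1 - (q * (y * x)) ^ 2) * (b * (y * x) - 1) *
          ((1 - q / (b * y) * x) / (1 - q ^ 2 * x ^ 2)) +
        (b + a * q * (y * x)) * (b * (y * x) + a) -
        y * x * (b ^ 2 - a ^ 2 * q ^ 2) *
          ((1 + a * y ^ 2) * (1 + a * q) / (1 - a ^ 2 * q ^ 2 * y ^ 2)) =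
      a * b * (y * x) * (1 - y ^ 2) * (b - q ^ 2 * x / y) *
          ((1 - q / (b * y) * x) / (1 - q ^ 2 * x ^ 2)) -
        a * b ^ 2 * (y * x) * ((1 - 1 / (b * y)) * (1 + a * y ^ 2) * (1 + a * (y ^ 2 * q)) *
          (1 + b * y) * (q / (b * y)) / (1 - a ^ 2 * q ^ 2 * y ^ 2)) := by
  field_simp
  ring

section Telescoping

variable {q a b : ℂ}

/-- The creative-telescoping certificate for the recursion of `∑ k, baseChangeSummand q a b n k`. -/
noncomputable def baseChangeCertificate (q a b : ℂ) (n k : ℕ) : ℂ :=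
  a * b * q ^ n * (1 - q ^ (2 * k)) * (b - q ^ (n + 2) / q ^ (2 * k)) *
    baseChangeSummand q a b (n + 1) k

lemma baseChangeCertificate_add (hq : q ≠ 0) (k i : ℕ) :
    baseChangeCertificate q a b (k + i) k =
      a * b * (q ^ k * q ^ i) * (1 - (q ^ k) ^ 2) * (b - q ^ 2 * q ^ i / q ^ k) *
        baseChangeSummand q a b (k + i + 1) k := by
  have hratio : q ^ (k + i + 2) / q ^ (2 * k) = q ^ 2 * q ^ i / q ^ k := by
    rw [div_eq_div_iff (pow_ne_zero _ hq) (pow_ne_zero k hq)]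
    ring
  rw [baseChangeCertificate, hratio]
  ring

lemma baseChangeCertificate_add_succ (hq : q ≠ 0) (hb : b ≠ 0) (k i : ℕ) :
    baseChangeCertificate q a b (k + i) (k + 1) =
      a * b ^ 2 * (q ^ k * q ^ i) *
        (baseChangeSummand q a b (k + i + 1) (k + 1) * (1 - 1 / (b * q ^ k) * q ^ i) *
          (1 - q ^ 2 * (q ^ k) ^ 2)) := by
  have hy : q ^ k ≠ 0 := pow_ne_zero k hq
  have hratio : q ^ (k + i + 2) / q ^ (2 * (k + 1)) = q ^ i / q ^ k := by
    rw [div_eq_div_iff (pow_ne_zero _ hq) hy]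
    ring
  have hfactor : b - q ^ i / q ^ k = b * (1 - 1 / (b * q ^ k) * q ^ i) := by
    field_simp
  rw [baseChangeCertificate, hratio, hfactor]
  ring

lemma baseChangeSummand_recursion (hq : q ≠ 0) (hb : b ≠ 0)
    (hq1 : ∀ m : ℕ, 1 ≤ m → q ^ m ≠ 1) (ha2 : ∀ m : ℕ, 1 ≤ m → a ^ 2 * q ^ (2 * m) ≠ 1)
    {n k : ℕ} (hk : k ≤ n) :
    a * b * (1 - q ^ (2 * (n + 1))) * (b * q ^ n - 1) * baseChangeSummand q a b (n + 1) k +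
        (b + a * q ^ (n + 1)) * (b * q ^ n + a) * baseChangeSummand q a b n k -
        q ^ n * (1 + a) * (b ^ 2 - a ^ 2 * q ^ 2) / (1 - a * q) *
          baseChangeSummand q (a * q) b n k =
      baseChangeCertificate q a b n k - baseChangeCertificate q a b n (k + 1) := by
  obtain ⟨i, rfl⟩ := Nat.exists_eq_add_of_le hk
  have hy : q ^ k ≠ 0 := pow_ne_zero k hq
  have hxq : 1 - q ^ 2 * (q ^ i) ^ 2 ≠ 0 := sub_ne_zero.2 fun h =>
    hq1 (2 * (i + 1)) (by omega) (by rw [h]; ring)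
  have haqy : 1 - a ^ 2 * q ^ 2 * (q ^ k) ^ 2 ≠ 0 := sub_ne_zero.2 fun h =>
    ha2 (k + 1) k.succ_pos (by rw [h]; ring)
  have haq : 1 - a * q ≠ 0 := sub_ne_zero.2 fun h =>
    mul_pow_ne_one_of_sq ha2 le_rfl (by rw [pow_one, h])
  have hleft := baseChangeSummand_succ_left a b i k hq hq1
  have hmul := baseChangeSummand_mul_self b k (k + i) ha2
  have hsucc := baseChangeSummand_succ_succ i k hq hb hq1 ha2
  have hid := creativeTelescoping_identity hb hy hxq haqy
  rw [pow_right_comm q 2 i, ← eq_div_iff hxq, mul_div_assoc] at hleft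
  rw [pow_right_comm q 2 k, ← eq_div_iff haqy] at hmul
  rw [pow_right_comm q 2 k, ← mul_assoc, ← eq_div_iff haqy, mul_div_assoc,
    pow_succ q (2 * k), show q ^ (2 * k) = (q ^ k) ^ 2 by ring] at hsucc
  have hfactor : (1 - a ^ 2 * q ^ 2) / (1 - a * q) = 1 + a * q := by
    rw [div_eq_iff haq]
    ring
  rw [baseChangeCertificate_add_succ hq hb, hsucc, baseChangeCertificate_add hq, hleft]
  linear_combination baseChangeSummand q a b (k + i) k * hid -
    q ^ (k + i) * (b ^ 2 - a ^ 2 * q ^ 2) / (1 - a * q) * hmul -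
    q ^ (k + i) * (b ^ 2 - a ^ 2 * q ^ 2) * baseChangeSummand q a b (k + i) k *
      (1 + a * q ^ (2 * k)) / (1 - a ^ 2 * q ^ 2 * (q ^ k) ^ 2) * hfactor

lemma baseChangeCertificate_zero (n : ℕ) : baseChangeCertificate q a b n 0 = 0 := by
  simp [baseChangeCertificate]

lemma baseChangeCertificate_succ_self (hq : q ≠ 0) (n : ℕ) :
    baseChangeCertificate q a b n (n + 1) =
      a * b * (1 - q ^ (2 * (n + 1))) * (b * q ^ n - 1) *
        baseChangeSummand q a b (n + 1) (n + 1) := by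
  have hratio : q ^ (n + 2) / q ^ (2 * (n + 1)) = 1 / q ^ n := by
    rw [div_eq_div_iff (pow_ne_zero _ hq) (pow_ne_zero _ hq)]
    ring
  rw [baseChangeCertificate, hratio]
  have hn : q ^ n ≠ 0 := pow_ne_zero n hq
  field_simp

lemma sum_baseChangeSummand_succ (hq : q ≠ 0) (hb : b ≠ 0)
    (hq1 : ∀ m : ℕ, 1 ≤ m → q ^ m ≠ 1) (ha2 : ∀ m : ℕ, 1 ≤ m → a ^ 2 * q ^ (2 * m) ≠ 1) (n : ℕ) :
    a * b * (1 - q ^ (2 * (n + 1))) * (b * q ^ n - 1) *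
        ∑ k ∈ Finset.range (n + 2), baseChangeSummand q a b (n + 1) k =
      q ^ n * (1 + a) * (b ^ 2 - a ^ 2 * q ^ 2) / (1 - a * q) *
          ∑ k ∈ Finset.range (n + 1), baseChangeSummand q (a * q) b n k -
        (b + a * q ^ (n + 1)) * (b * q ^ n + a) *
          ∑ k ∈ Finset.range (n + 1), baseChangeSummand q a b n k := by
  have htelescope := Finset.sum_range_sub' (baseChangeCertificate q a b n) (n + 1)
  rw [Finset.sum_congr rfl fun k hk => (baseChangeSummand_recursion hq hb hq1 ha2
      (Nat.lt_succ_iff.1 (Finset.mem_range.1 hk))).symm,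
    Finset.sum_sub_distrib, Finset.sum_add_distrib, ← Finset.mul_sum, ← Finset.mul_sum,
    ← Finset.mul_sum, baseChangeCertificate_zero, baseChangeCertificate_succ_self hq] at htelescope
  rw [Finset.sum_range_succ _ (n + 1)]
  linear_combination htelescope

end Telescoping

section Summation

variable {q : ℂ}

/-- The closed form of `∑ k ∈ Finset.range (n + 1), baseChangeSummand q a b n k`. -/
noncomputable def baseChangeSum (q a b : ℂ) (n : ℕ) : ℂ :=
  qPoch (-(a * q) / b) q n / (qPoch q q n * qPoch (a * q) q n)

lemma baseChangeSum_succ {a b : ℂ} (hb : b ≠ 0) (hq1 : ∀ m : ℕ, 1 ≤ m → q ^ m ≠ 1) (n : ℕ) :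
    b * (1 - q ^ (2 * (n + 1))) * baseChangeSum q a b (n + 1) =
      (1 + q * q ^ n) * (b + a * q * q ^ n) / (1 - a * q * q ^ n) * baseChangeSum q a b n := by
  have hqn := qPoch_self_ne_zero (n + 1) hq1
  rw [qPoch_succ] at hqn
  have hfactor := right_ne_zero_of_mul hqn
  simp only [baseChangeSum]
  rw [qPoch_succ, qPoch_succ, qPoch_succ,
    show 1 - q ^ (2 * (n + 1)) = (1 + q * q ^ n) * (1 - q * q ^ n) by ring]
  field_simp
  ring

lemma baseChangeSum_mul_self {a b : ℂ} (hb : b ≠ 0) (n : ℕ) :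
    (b ^ 2 - a ^ 2 * q ^ 2) / (1 - a * q) * baseChangeSum q (a * q) b n =
      (b - a * q) * (b + a * q * q ^ n) / (1 - a * q * q ^ n) * baseChangeSum q a b n := by
  have hden := one_sub_mul_qPoch_mul (a * q) q n
  have hnum := one_sub_mul_qPoch_mul (-(a * q) / b) q n
  have hcancel : b * (-(a * q) / b) = -(a * q) := mul_div_cancel₀ _ hb
  have hnum' : (b ^ 2 - a ^ 2 * q ^ 2) * qPoch (-(a * q) / b * q) q n =
      (b - a * q) * (b + a * q * q ^ n) * qPoch (-(a * q) / b) q n := by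
    linear_combination (b - a * q) * (b * hnum + (qPoch (-(a * q) / b * q) q n -
      qPoch (-(a * q) / b) q n * q ^ n) * hcancel)
  rw [baseChangeSum, baseChangeSum, show -(a * q * q) / b = -(a * q) / b * q by ring,
    div_mul_div_comm, div_mul_div_comm, hnum', mul_left_comm, hden]
  ring

lemma baseChangeSum_recursion {a b : ℂ} (hb : b ≠ 0) (hq1 : ∀ m : ℕ, 1 ≤ m → q ^ m ≠ 1) (n : ℕ)
    (haqn : 1 - a * q * q ^ n ≠ 0) :
    a * b * (1 - q ^ (2 * (n + 1))) * (b * q ^ n - 1) * baseChangeSum q a b (n + 1) =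
      q ^ n * (1 + a) * (b ^ 2 - a ^ 2 * q ^ 2) / (1 - a * q) * baseChangeSum q (a * q) b n -
        (b + a * q ^ (n + 1)) * (b * q ^ n + a) * baseChangeSum q a b n := by
  have hpoly : a * (b * q ^ n - 1) * ((1 + q * q ^ n) / (1 - a * q * q ^ n)) =
      q ^ n * (1 + a) * ((b - a * q) / (1 - a * q * q ^ n)) - (b * q ^ n + a) := by
    rw [← mul_div_assoc, ← mul_div_assoc, div_sub' haqn]
    congr 1
    ring
  linear_combination
    a * (b * q ^ n - 1) * baseChangeSum_succ (a := a) hb hq1 n -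
      q ^ n * (1 + a) * baseChangeSum_mul_self (q := q) (a := a) hb n +
      (b + a * q * q ^ n) * baseChangeSum q a b n * hpoly

theorem sum_baseChangeSummand (hq : q ≠ 0) (hq1 : ∀ m : ℕ, 1 ≤ m → q ^ m ≠ 1) (n : ℕ) {a b : ℂ}
    (ha : a ≠ 0) (hb : b ≠ 0) (ha2 : ∀ m : ℕ, 1 ≤ m → a ^ 2 * q ^ (2 * m) ≠ 1)
    (hbq : ∀ j : ℕ, b * q ^ j ≠ 1) :
    ∑ k ∈ Finset.range (n + 1), baseChangeSummand q a b n k = baseChangeSum q a b n := by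
  induction n generalizing a with
  | zero =>
    simp [baseChangeSum, baseChangeSummand, baseChangeKernel, baseChangeWeight_zero, qPoch_zero]
  | succ n ih =>
    have haq2 : ∀ m : ℕ, 1 ≤ m → (a * q) ^ 2 * q ^ (2 * m) ≠ 1 := by
      simpa only [pow_one] using sq_mul_pow_ne_one_shift ha2 1
    have hcoeff : a * b * (1 - q ^ (2 * (n + 1))) * (b * q ^ n - 1) ≠ 0 :=
      mul_ne_zero (mul_ne_zero (mul_ne_zero ha hb)
        (sub_ne_zero.2 (hq1 (2 * (n + 1)) (by omega)).symm)) (sub_ne_zero.2 (hbq n))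
    refine mul_left_cancel₀ hcoeff ?_
    rw [sum_baseChangeSummand_succ hq hb hq1 ha2, ih ha ha2, ih (mul_ne_zero ha hq) haq2,
      baseChangeSum_recursion hb hq1 n]
    rw [mul_assoc, ← pow_succ']
    exact sub_ne_zero.2 (mul_pow_ne_one_of_sq ha2 n.succ_pos).symm

end Summation

section ChangeOfBase

theorem IsBaileyPair.changeOfBase {a q a' q' : ℂ} {α β c : ℕ → ℂ} {M : ℕ → ℕ → ℂ}
    (hpair : IsBaileyPair a q α β)
    (hM : ∀ r n : ℕ, ∑ k ∈ Finset.range (n + 1),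
        M (r + n) (r + k) / (qPoch q q k * qPoch (a * q) q (r + k + r)) =
      c r / (qPoch q' q' n * qPoch (a' * q') q' (r + n + r))) :
    IsBaileyPair a' q' (fun r => c r * α r) (fun n => ∑ k ∈ Finset.range (n + 1), M n k * β k) := by
  intro n
  calc ∑ k ∈ Finset.range (n + 1), M n k * β k
      = ∑ k ∈ Finset.range (n + 1), ∑ r ∈ Finset.range (k + 1),
          M n k / (qPoch q q (k - r) * qPoch (a * q) q (k + r)) * α r :=
        Finset.sum_congr rfl fun k _ => by
          rw [hpair k, Finset.mul_sum]
          exact Finset.sum_congr rfl fun r _ => by ring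
    _ = ∑ r ∈ Finset.range (n + 1), ∑ k ∈ Finset.Ico r (n + 1),
          M n k / (qPoch q q (k - r) * qPoch (a * q) q (k + r)) * α r :=
        Finset.sum_comm' fun k r => by
          simp only [Finset.mem_range, Finset.mem_Ico]
          omega
    _ = ∑ r ∈ Finset.range (n + 1),
          c r * α r / (qPoch q' q' (n - r) * qPoch (a' * q') q' (n + r)) :=
        Finset.sum_congr rfl fun r hr => by
          obtain ⟨m, rfl⟩ := Nat.exists_eq_add_of_le (Nat.lt_succ_iff.1 (Finset.mem_range.1 hr))
          rw [← Finset.sum_mul, Finset.sum_Ico_eq_sum_range, add_assoc, Nat.add_sub_cancel_left,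
            Nat.add_sub_cancel_left, mul_div_right_comm, ← hM r m]
          simp only [Nat.add_sub_cancel_left]

variable {q a B : ℂ}

lemma baseChangeKernel_div_eq (hB1 : ∀ j : ℕ, B * q ^ j ≠ 1) {n k : ℕ} (hk : k ≤ n) :
    (qPoch (-a) q (2 * k) * qPoch (B ^ 2) (q ^ 2) k *
        qPoch (q ^ (1 - (k : ℤ)) / B) q (n - k) * qPoch (B * q ^ k) q (n - k)) /
      (qPoch (-(a * q) / B) q n * qPoch B q n * qPoch (q ^ 2) (q ^ 2) (n - k)) *
      B ^ (-(k : ℤ)) * q ^ ((k : ℤ) - ((k * (k - 1) / 2 : ℕ) : ℤ)) =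
    baseChangeKernel q a B n k / qPoch (-(a * q) / B) q n := by
  obtain ⟨i, rfl⟩ := Nat.exists_eq_add_of_le hk
  have hB : qPoch B q k * qPoch (B * q ^ k) q i ≠ 0 := qPoch_add B q k i ▸ qPoch_ne_zero _ hB1
  rw [Nat.add_sub_cancel_left, qPoch_sq, qPoch_add B, baseChangeKernel, baseChangeWeight,
    Nat.add_sub_cancel_left]
  linear_combination
    qPoch (-a) q (2 * k) * qPoch (-B) q k * qPoch (q ^ (1 - (k : ℤ)) / B) q i *
      B ^ (-(k : ℤ)) * q ^ ((k : ℤ) - ((k * (k - 1) / 2 : ℕ) : ℤ)) /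
      (qPoch (-(a * q) / B) q (k + i) * qPoch (q ^ 2) (q ^ 2) i) * div_self hB

lemma qPoch_div_qPoch_mul_sq (ha2 : ∀ m : ℕ, 1 ≤ m → a ^ 2 * q ^ (2 * m) ≠ 1) {n : ℕ}
    (han : 1 + a * q ^ n ≠ 0) :
    qPoch (-a) q n / qPoch (a ^ 2 * q ^ 2) (q ^ 2) n =
      (1 + a) / (1 + a * q ^ n) / qPoch (a * q) q n := by
  have hsq := qPoch_mul_sq_ne_zero ha2 n
  have hshift := one_sub_mul_qPoch_mul (-a) q n
  rw [← mul_pow, qPoch_sq] at hsq ⊢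
  rw [neg_mul, neg_mul, sub_neg_eq_add, sub_neg_eq_add] at hshift
  rw [div_div, div_eq_div_iff hsq (mul_ne_zero han (left_ne_zero_of_mul hsq))]
  linear_combination -qPoch (a * q) q n * hshift

theorem sum_baseChangeKernel (hq : q ≠ 0) (ha : a ≠ 0) (hB : B ≠ 0)
    (hq1 : ∀ m : ℕ, 1 ≤ m → q ^ m ≠ 1) (ha2 : ∀ m : ℕ, 1 ≤ m → a ^ 2 * q ^ (2 * m) ≠ 1)
    (hB1 : ∀ j : ℕ, B * q ^ j ≠ 1) {r : ℕ} (har : 1 + a * q ^ (2 * r) ≠ 0) (n : ℕ) :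
    ∑ k ∈ Finset.range (n + 1), baseChangeKernel q a B (r + n) (r + k) /
        (qPoch (q ^ 2) (q ^ 2) k * qPoch (a ^ 2 * q ^ 2) (q ^ 2) (r + k + r)) =
      qPoch (-B) q r * ((1 + a) / (1 + a * q ^ (2 * r))) * baseChangeWeight q B r *
        qPoch (-(a * q) / B * q ^ r) q n / (qPoch q q n * qPoch (a * q) q (r + n + r)) := by
  have hqr : q ^ r ≠ 0 := pow_ne_zero r hq
  have hterm (k : ℕ) : baseChangeKernel q a B (r + n) (r + k) /
        (qPoch (q ^ 2) (q ^ 2) k * qPoch (a ^ 2 * q ^ 2) (q ^ 2) (r + k + r)) =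
      qPoch (-a) q (2 * r) / qPoch (a ^ 2 * q ^ 2) (q ^ 2) (2 * r) *
        (qPoch (-B) q r * baseChangeWeight q B r) *
        baseChangeSummand q (a * q ^ (2 * r)) (B * q ^ r) n k := by
    rw [baseChangeKernel_add_add a hq hB, baseChangeSummand, show r + k + r = 2 * r + k by ring,
      qPoch_add, show a ^ 2 * q ^ 2 * (q ^ 2) ^ (2 * r) = (a * q ^ (2 * r)) ^ 2 * q ^ 2 by ring]
    ring
  have hsum := sum_baseChangeSummand hq hq1 n (mul_ne_zero ha (pow_ne_zero (2 * r) hq))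
    (mul_ne_zero hB hqr) (sq_mul_pow_ne_one_shift ha2 (2 * r)) fun j => by
      rw [mul_assoc, ← pow_add]
      exact hB1 (r + j)
  have hbase : -(a * q ^ (2 * r) * q) / (B * q ^ r) = -(a * q) / B * q ^ r := by
    field_simp
    ring
  simp only [hterm]
  rw [← Finset.mul_sum, hsum, baseChangeSum, hbase, qPoch_div_qPoch_mul_sq ha2 har,
    show r + n + r = 2 * r + n by ring, qPoch_add (a * q),
    show a * q ^ (2 * r) * q = a * q * q ^ (2 * r) by ring]
  ring

theorem sum_baseChangeKernel_div (hq : q ≠ 0) (ha : a ≠ 0) (hB : B ≠ 0)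
    (hq1 : ∀ m : ℕ, 1 ≤ m → q ^ m ≠ 1) (ha2 : ∀ m : ℕ, 1 ≤ m → a ^ 2 * q ^ (2 * m) ≠ 1)
    (hB1 : ∀ j : ℕ, B * q ^ j ≠ 1) {r : ℕ} (har : 1 + a * q ^ (2 * r) ≠ 0) {n : ℕ}
    (hpoch : qPoch (-(a * q) / B) q (r + n) ≠ 0) :
    ∑ k ∈ Finset.range (n + 1),
        baseChangeKernel q a B (r + n) (r + k) / qPoch (-(a * q) / B) q (r + n) /
          (qPoch (q ^ 2) (q ^ 2) k * qPoch (a ^ 2 * q ^ 2) (q ^ 2) (r + k + r)) =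
      qPoch (-B) q r / qPoch (-(a * q) / B) q r * ((1 + a) / (1 + a * q ^ (2 * r))) *
        baseChangeWeight q B r / (qPoch q q n * qPoch (a * q) q (r + n + r)) := by
  rw [qPoch_add] at hpoch
  have hcancel := mul_div_mul_right 1 (qPoch (-(a * q) / B) q r) (right_ne_zero_of_mul hpoch)
  simp only [div_right_comm _ (qPoch (-(a * q) / B) q (r + n))]
  rw [← Finset.sum_div, sum_baseChangeKernel hq ha hB hq1 ha2 hB1 har, qPoch_add (-(a * q) / B)]
  linear_combination qPoch (-B) q r * ((1 + a) / (1 + a * q ^ (2 * r))) *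
    baseChangeWeight q B r / (qPoch q q n * qPoch (a * q) q (r + n + r)) * hcancel

end ChangeOfBase

/-- Theorem 2.5: a companion base change from `(a², q²)` to `(a, q)`. -/
theorem bailey_base_change_thm25 (q a B : ℂ)
    (hq : q ≠ 0) (ha : a ≠ 0) (hB : B ≠ 0)
    (hq1 : ∀ m : ℕ, 1 ≤ m → q ^ m ≠ 1)
    (ha1 : ∀ m : ℕ, 1 ≤ m → a * q ^ m ≠ 1)
    (ha2 : ∀ m : ℕ, 1 ≤ m → a ^ 2 * q ^ (2 * m) ≠ 1)
    (har : ∀ r : ℕ, a * q ^ (2 * r) ≠ -1)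
    (hB1 : ∀ j : ℕ, B * q ^ j ≠ 1)
    (hB2 : ∀ j : ℕ, a * q ^ (j + 1) ≠ -B)
    (α β : ℕ → ℂ)
    (hpair : IsBaileyPair (a ^ 2) (q ^ 2) α β) :
    IsBaileyPair a q
      (fun r => qPoch (-B) q r / qPoch (-(a * q) / B) q r * ((1 + a) / (1 + a * q ^ (2 * r))) *
        B ^ (-(r : ℤ)) * q ^ ((r : ℤ) - ((r * (r - 1) / 2 : ℕ) : ℤ)) * α r)
      (fun n => ∑ k ∈ Finset.range (n + 1),
        (qPoch (-a) q (2 * k) * qPoch (B ^ 2) (q ^ 2) k *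
            qPoch (q ^ (1 - (k : ℤ)) / B) q (n - k) * qPoch (B * q ^ k) q (n - k)) /
          (qPoch (-(a * q) / B) q n * qPoch B q n * qPoch (q ^ 2) (q ^ 2) (n - k)) *
          B ^ (-(k : ℤ)) * q ^ ((k : ℤ) - ((k * (k - 1) / 2 : ℕ) : ℤ)) * β k) := by
  have hpoch (n : ℕ) : qPoch (-(a * q) / B) q n ≠ 0 := qPoch_ne_zero n fun j h => hB2 j <| by
    rw [div_mul_eq_mul_div, div_eq_one_iff_eq hB] at h
    linear_combination -h
  have hnew := hpair.changeOfBase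
    (M := fun n k => baseChangeKernel q a B n k / qPoch (-(a * q) / B) q n) fun r n =>
      sum_baseChangeKernel_div hq ha hB hq1 ha2 hB1
        (fun h => har r (eq_neg_of_add_eq_zero_right h)) (hpoch (r + n))
  intro n
  refine (Finset.sum_congr rfl fun k hk => congrArg (· * β k)
    (baseChangeKernel_div_eq hB1 (Nat.lt_succ_iff.1 (Finset.mem_range.1 hk)))).trans ?_
  simpa only [baseChangeWeight, ← mul_assoc] using hnew n
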